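/- Let Γ be a finite extensive-form game with perfect recall. A behavioral strategy profile β* is a subgame perfect equilibrium in behavioral strategies (its restriction to every subgame is a Nash equilibrium in behavioral strategies of that subgame) if and only if there exist a behavioral strategy profile β̃* and a belief system μ* such that (β*, β̃*, μ*) satisfies the subgame perfect characterization. -/

import Mathlib

open scoped Classical

noncomputable section

/-- A finite extensive-form game.  Actions are labelled by natural numbers drawn from the
finite pool `actFinset`; a history is the list of actions taken so far; players are `Fin n`
and `P h = none` means that the chance player moves after `h`.  The information sets of
player `i` are `Info i j` for `j < m i`, and `infoIdx h` is the index of the information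
set containing a nonterminal history `h` at which some player moves.  Payoffs `u i h` are
relevant on terminal histories. -/
structure EFG where
  n : ℕ
  actFinset : Finset ℕ
  H : Finset (List ℕ)
  P : List ℕ → Option (Fin n)
  fc : List ℕ → ℕ → ℝ
  m : Fin n → ℕ
  Info : Fin n → ℕ → Finset (List ℕ)
  infoIdx : List ℕ → ℕ
  u : Fin n → List ℕ → ℝ
  empty_mem : ([] : List ℕ) ∈ H
  prefixClosed : ∀ h ∈ H, ∀ h' : List ℕ, h' <+: h → h' ∈ H
  act_mem : ∀ (h : List ℕ) (a : ℕ), h ++ [a] ∈ H → a ∈ actFinset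
  fc_nonneg : ∀ h a, 0 ≤ fc h a
  fc_sum : ∀ h ∈ H, P h = none → (∃ a, h ++ [a] ∈ H) →
    ∑ a ∈ actFinset.filter (fun a => h ++ [a] ∈ H), fc h a = 1
  info_spec : ∀ (i : Fin n) (j : ℕ) (h : List ℕ), j < m i →
    (h ∈ Info i j ↔ h ∈ H ∧ P h = some i ∧ (∃ a, h ++ [a] ∈ H) ∧ infoIdx h = j)
  infoIdx_lt : ∀ (i : Fin n), ∀ h ∈ H, P h = some i → (∃ a, h ++ [a] ∈ H) → infoIdx h < m i
  info_nonempty : ∀ (i : Fin n) (j : ℕ), j < m i → (Info i j).Nonempty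
  info_actions : ∀ (i : Fin n) (j : ℕ), j < m i → ∀ h ∈ Info i j, ∀ h' ∈ Info i j,
    ∀ a : ℕ, (h ++ [a] ∈ H ↔ h' ++ [a] ∈ H)
  act_unique : ∀ (h h' : List ℕ) (a : ℕ), h ∈ H → h' ∈ H → h ++ [a] ∈ H → h' ++ [a] ∈ H →
    P h = P h' ∧ infoIdx h = infoIdx h'

namespace EFG

/-- Behavioral strategy profiles (player, information-set index, action ↦ probability). -/
abbrev Profile (G : EFG) : Type := Fin G.n → ℕ → ℕ → ℝ

/-- Belief systems (player, information-set index, history ↦ probability). -/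
abbrev Belief (G : EFG) : Type := Fin G.n → ℕ → List ℕ → ℝ

variable (G : EFG)

/-- The set `Z` of terminal histories. -/
def Zset : Finset (List ℕ) := G.H.filter fun h => ∀ a : ℕ, h ++ [a] ∉ G.H

/-- The set `A(h)` of actions available after a history. -/
def A (h : List ℕ) : Finset ℕ := G.actFinset.filter fun a => h ++ [a] ∈ G.H

/-- The common action set `A(I_i^j)` of an information set. -/
def infoA (i : Fin G.n) (j : ℕ) : Finset ℕ := (G.Info i j).sup fun h => G.A h

/-- A behavioral strategy of player `i`: a probability distribution on `A(I_i^j)` for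
each information set `I_i^j`. -/
def IsBehStrategy (i : Fin G.n) (b : ℕ → ℕ → ℝ) : Prop :=
  ∀ j < G.m i, (∀ a ∈ G.infoA i j, 0 ≤ b j a) ∧ ∑ a ∈ G.infoA i j, b j a = 1

/-- A behavioral strategy profile. -/
def IsBehProfile (β : G.Profile) : Prop := ∀ i : Fin G.n, G.IsBehStrategy i (β i)

/-- The probability of action `a` at history `h`: the chance distribution if the chance
player moves, and the mover's behavioral strategy otherwise. -/
def moveProb (β : G.Profile) (h : List ℕ) (a : ℕ) : ℝ :=
  (G.P h).elim (G.fc h a) fun i => β i (G.infoIdx h) a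

/-- Player `i`'s record `X_i` of the information sets he encounters along a history and the
actions he takes at them, accumulated starting from the prefix `pre`. -/
def recordFrom (i : Fin G.n) : List ℕ → List ℕ → List (ℕ × ℕ)
  | _, [] => []
  | pre, b :: rest =>
    (if G.P pre = some i then [(G.infoIdx pre, b)] else []) ++ recordFrom i (pre ++ [b]) rest

/-- Perfect recall. -/
def PerfectRecall : Prop :=
  ∀ (i : Fin G.n) (j : ℕ), j < G.m i →
    ∀ h ∈ G.Info i j, ∀ h' ∈ G.Info i j, G.recordFrom i [] h = G.recordFrom i [] h'

/-- Product of the move probabilities along `rest`, continuing from the prefix `pre`. -/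
def prodAlong (β : G.Profile) : List ℕ → List ℕ → ℝ
  | _, [] => 1
  | pre, b :: rest => G.moveProb β pre b * prodAlong β (pre ++ [b]) rest

/-- `ω(h|β)`: the probability that the moves along `h` are played under `β`. -/
def omega (β : G.Profile) (h : List ℕ) : ℝ := G.prodAlong β [] h

/-- `ω(I_i^j|β)`. -/
def omegaInfo (i : Fin G.n) (j : ℕ) (β : G.Profile) : ℝ := ∑ h ∈ G.Info i j, G.omega β h

/-- Product of the move probabilities along `rest` from `pre`, disregarding player `i`'s
own moves. -/
def prodAlongNot (i : Fin G.n) (β : G.Profile) : List ℕ → List ℕ → ℝ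
  | _, [] => 1
  | pre, b :: rest =>
    (if G.P pre = some i then 1 else G.moveProb β pre b) * prodAlongNot i β (pre ++ [b]) rest

/-- `S^i(h|β)`: probability of the moves along `h`, disregarding player `i`'s own moves. -/
def Sh (i : Fin G.n) (β : G.Profile) (h : List ℕ) : ℝ := G.prodAlongNot i β [] h

/-- `S^i(I_i^j|β)`. -/
def SInfo (i : Fin G.n) (j : ℕ) (β : G.Profile) : ℝ := ∑ h ∈ G.Info i j, G.Sh i β h

/-- Product of the move probabilities along `rest` from `pre`, with the factor at prefixes
lying in `I_i^j` omitted. -/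
def prodAlongSkip (i : Fin G.n) (j : ℕ) (β : G.Profile) : List ℕ → List ℕ → ℝ
  | _, [] => 1
  | pre, b :: rest =>
    (if pre ∈ G.Info i j then 1 else G.moveProb β pre b) * prodAlongSkip i j β (pre ++ [b]) rest

/-- `q ∈ M(a, I_i^j)`: `I_i^q` is a first information set of player `i` after action `a`
(every history in `I_i^q` contains `a`, with no later action of `a` lying in any action set
of player `i`). -/
def FirstAfter (i : Fin G.n) (a : ℕ) (q : ℕ) : Prop :=
  q < G.m i ∧ ∀ h ∈ G.Info i q, ∃ l₁ l₂ : List ℕ,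
    h = l₁ ++ a :: l₂ ∧ ∀ b ∈ l₂, ∀ p < G.m i, b ∉ G.infoA i p

/-- `q ∈ M(I_i^j) = ∪_{a ∈ A(I_i^j)} M(a, I_i^j)`. -/
def MInfo (i : Fin G.n) (j : ℕ) (q : ℕ) : Prop := ∃ a ∈ G.infoA i j, G.FirstAfter i a q

/-- `q ∈ Λ(a, I_i^j)`: every history in `I_i^q` contains the action `a`. -/
def LambdaSet (i : Fin G.n) (a : ℕ) (q : ℕ) : Prop :=
  q < G.m i ∧ ∀ h ∈ G.Info i q, ∃ l₁ l₂ : List ℕ, h = l₁ ++ a :: l₂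

/-- `ϱ^i_{I_i^j}(β, β̃)`: replace player `i`'s component of `β` by that of `β̃` at every
information set `I_i^q` such that some history in `I_i^q` contains an action of `A(I_i^j)`. -/
def rho (i : Fin G.n) (j : ℕ) (β βt : G.Profile) : G.Profile := fun p q =>
  if p = i ∧ ∃ h ∈ G.Info i q, ∃ b ∈ h, b ∈ G.infoA i j then βt i q else β p q

/-- A belief system: a probability distribution on each information set. -/
def IsBelief (μ : G.Belief) : Prop :=
  ∀ (i : Fin G.n) (j : ℕ), j < G.m i →
    (∀ h ∈ G.Info i j, 0 ≤ μ i j h) ∧ ∑ h ∈ G.Info i j, μ i j h = 1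

/-- A self-independent belief system for `β`:
`S^i(I_i^j|β) · μ^i_{I_i^j}(h) = S^i(h|β)`. -/
def SelfIndep (β : G.Profile) (μ : G.Belief) : Prop :=
  ∀ (i : Fin G.n) (j : ℕ), j < G.m i → ∀ h ∈ G.Info i j,
    G.SInfo i j β * μ i j h = G.Sh i β h

/-- Auxiliary for `ν`: scan `rest` from `pre` for the subhistory lying in `I_i^j`, then
weight by the belief and multiply the move probabilities of the remaining moves (the move
taken at the subhistory itself being skipped). -/
def nuAux (i : Fin G.n) (j : ℕ) (β : G.Profile) (w : List ℕ → ℝ) : List ℕ → List ℕ → ℝ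
  | _, [] => 0
  | pre, b :: rest =>
    if pre ∈ G.Info i j then w pre * G.prodAlong β (pre ++ [b]) rest
    else nuAux i j β w (pre ++ [b]) rest

/-- `ν^i_{I_i^j}(h | a, β^{-I_i^j}, μ)` (it does not involve the component of `β` at
`I_i^j`). -/
def nu (i : Fin G.n) (j : ℕ) (β : G.Profile) (μ : G.Belief) (h : List ℕ) : ℝ :=
  G.nuAux i j β (μ i j) [] h

/-- `u^i((a, β^{-I_i^j}) ∧ I_i^j)`. -/
def uWedgeAct (i : Fin G.n) (j : ℕ) (a : ℕ) (β : G.Profile) : ℝ :=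
  ∑ h ∈ G.Zset.filter (fun h => a ∈ h), G.u i h * G.prodAlongSkip i j β [] h

/-- `u^i(β ∧ I_i^j)`. -/
def uWedge (i : Fin G.n) (j : ℕ) (β : G.Profile) : ℝ :=
  ∑ h ∈ G.Zset.filter (fun h => ∃ b ∈ h, b ∈ G.infoA i j), G.u i h * G.omega β h

/-- The conditional expected payoff `u^i(a, β^{-I_i^j}, μ | I_i^j)`. -/
def uCond (i : Fin G.n) (j : ℕ) (a : ℕ) (β : G.Profile) (μ : G.Belief) : ℝ :=
  ∑ h ∈ G.Zset.filter (fun h => a ∈ h), G.u i h * G.nu i j β μ h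

/-- The expected payoff `u^i(β)`. -/
def uExp (i : Fin G.n) (β : G.Profile) : ℝ := ∑ h ∈ G.Zset, G.u i h * G.omega β h

/-- The profile obtained from `β` by replacing all of player `i`'s components by `b`. -/
def replace (β : G.Profile) (i : Fin G.n) (b : ℕ → ℕ → ℝ) : G.Profile :=
  fun p => if p = i then b else β p

/-- `β` is a Nash equilibrium in behavioral strategies. -/
def IsNash (β : G.Profile) : Prop :=
  G.IsBehProfile β ∧ ∀ (i : Fin G.n) (b : ℕ → ℕ → ℝ), G.IsBehStrategy i b →
    G.uExp i (G.replace β i b) ≤ G.uExp i β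

/-- `(β, β̃, μ)` satisfies the Nash characterization (Definition 2 of the paper). -/
def NashChar (β βt : G.Profile) (μ : G.Belief) : Prop :=
  (∀ (i : Fin G.n) (j : ℕ), j < G.m i → ∀ a' ∈ G.infoA i j, ∀ a'' ∈ G.infoA i j,
    G.uWedgeAct i j a' (G.rho i j β βt) < G.uWedgeAct i j a'' (G.rho i j β βt) →
    β i j a' = 0) ∧
  (∀ (i : Fin G.n) (j : ℕ), j < G.m i → ∀ a' ∈ G.infoA i j, ∀ a'' ∈ G.infoA i j,
    G.uCond i j a' (G.rho i j β βt) μ < G.uCond i j a'' (G.rho i j β βt) μ →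
    βt i j a' = 0) ∧
  G.IsBelief μ ∧ G.SelfIndep β μ

/-- `r` is the root of a subgame: every information set lies entirely inside or entirely
outside the set of histories extending `r`. -/
def IsSubgameRoot (r : List ℕ) : Prop :=
  r ∈ G.H ∧ ∀ (i : Fin G.n) (j : ℕ), j < G.m i →
    (∀ h ∈ G.Info i j, r <+: h) ∨ ∀ h ∈ G.Info i j, ¬ r <+: h

/-- The depth `g` of the smallest subgame containing `A(I_i^j)` (the length of the longest
subgame root preceding every history of `I_i^j`). -/
def sgDepthInfo (i : Fin G.n) (j : ℕ) : ℕ :=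
  (G.H.filter fun r => G.IsSubgameRoot r ∧ ∀ h ∈ G.Info i j, r <+: h).sup List.length

/-- The depth `q(h)` of the smallest subgame containing the last action of `h`. -/
def sgDepthHist (h : List ℕ) : ℕ :=
  (G.H.filter fun r => G.IsSubgameRoot r ∧ r <+: h.dropLast).sup List.length

/-- `C^i_{I_i^j}(h|β)`: product of move probabilities along `h` within the smallest subgame
containing `A(I_i^j)`. -/
def Ch (i : Fin G.n) (j : ℕ) (β : G.Profile) (h : List ℕ) : ℝ :=
  G.prodAlong β (h.take (G.sgDepthInfo i j)) (h.drop (G.sgDepthInfo i j))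

/-- `C^i_{I_i^j}(I_i^j|β)`. -/
def CInfo (i : Fin G.n) (j : ℕ) (β : G.Profile) : ℝ := ∑ h ∈ G.Info i j, G.Ch i j β h

/-- `u^i((a, β^{-I_i^j}) ⋄ I_i^j)`. -/
def uDiamondAct (i : Fin G.n) (j : ℕ) (a : ℕ) (β : G.Profile) : ℝ :=
  ∑ h ∈ G.Zset.filter (fun h => a ∈ h), G.u i h *
    G.prodAlongSkip i j β (h.take (G.sgDepthInfo i j)) (h.drop (G.sgDepthInfo i j))

/-- `Y^i(h|β)`: like `S^i(h|β)` but within the smallest subgame containing the last action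
of `h`. -/
def Yh (i : Fin G.n) (β : G.Profile) (h : List ℕ) : ℝ :=
  G.prodAlongNot i β (h.take (G.sgDepthHist h)) (h.drop (G.sgDepthHist h))

/-- `Y^i(I_i^j|β)`. -/
def YInfo (i : Fin G.n) (j : ℕ) (β : G.Profile) : ℝ := ∑ h ∈ G.Info i j, G.Yh i β h

/-- The belief condition `Y^i(I_i^j|β) · μ^i_{I_i^j}(h) = Y^i(h|β)`. -/
def YConsistent (β : G.Profile) (μ : G.Belief) : Prop :=
  ∀ (i : Fin G.n) (j : ℕ), j < G.m i → ∀ h ∈ G.Info i j,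
    G.YInfo i j β * μ i j h = G.Yh i β h

/-- The expected payoff of player `i` in the subgame rooted at `r` (payoffs of terminal
histories extending `r`, weighted by the move probabilities within the subgame). -/
def uExpFrom (i : Fin G.n) (β : G.Profile) (r : List ℕ) : ℝ :=
  ∑ h ∈ G.Zset.filter (fun h => r <+: h), G.u i h * G.prodAlong β r (h.drop r.length)

/-- `β` is a subgame perfect equilibrium in behavioral strategies: its restriction to every
subgame is a Nash equilibrium in behavioral strategies of that subgame. -/
def IsSubgamePerfect (β : G.Profile) : Prop :=
  G.IsBehProfile β ∧ ∀ r : List ℕ, G.IsSubgameRoot r →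
    ∀ (i : Fin G.n) (b : ℕ → ℕ → ℝ), G.IsBehStrategy i b →
      G.uExpFrom i (G.replace β i b) r ≤ G.uExpFrom i β r

/-- `(β, β̃, μ)` satisfies the subgame perfect characterization (Definition 6 of the
paper). -/
def SubgameChar (β βt : G.Profile) (μ : G.Belief) : Prop :=
  (∀ (i : Fin G.n) (j : ℕ), j < G.m i → ∀ a' ∈ G.infoA i j, ∀ a'' ∈ G.infoA i j,
    G.uDiamondAct i j a' (G.rho i j β βt) < G.uDiamondAct i j a'' (G.rho i j β βt) →
    β i j a' = 0) ∧
  (∀ (i : Fin G.n) (j : ℕ), j < G.m i → ∀ a' ∈ G.infoA i j, ∀ a'' ∈ G.infoA i j,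
    G.uCond i j a' (G.rho i j β βt) μ < G.uCond i j a'' (G.rho i j β βt) μ →
    βt i j a' = 0) ∧
  G.IsBelief μ ∧ G.YConsistent β μ

/-- `(β, μ)` is a semi-sequential equilibrium. -/
def SemiSeqEq (β : G.Profile) (μ : G.Belief) : Prop :=
  G.IsBehProfile β ∧ G.IsBelief μ ∧ G.SelfIndep β μ ∧
  ∀ (i : Fin G.n) (j : ℕ), j < G.m i → ∀ a' ∈ G.infoA i j, ∀ a'' ∈ G.infoA i j,
    G.uCond i j a' β μ < G.uCond i j a'' β μ → β i j a' = 0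

/-- `(β, μ)` is a subgame perfect semi-sequential equilibrium. -/
def SubgameSemiSeqEq (β : G.Profile) (μ : G.Belief) : Prop :=
  G.IsBehProfile β ∧ G.IsBelief μ ∧ G.YConsistent β μ ∧
  ∀ (i : Fin G.n) (j : ℕ), j < G.m i → ∀ a' ∈ G.infoA i j, ∀ a'' ∈ G.infoA i j,
    G.uCond i j a' β μ < G.uCond i j a'' β μ → β i j a' = 0

/-- `d(I_i^j)`: the number of information sets of player `i` containing a prefix of some
history of `I_i^j` (counting `I_i^j` itself). -/
def dInfo (i : Fin G.n) (j : ℕ) : ℕ :=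
  ((Finset.range (G.m i)).filter
    (fun q => ∃ h ∈ G.Info i j, ∃ p : List ℕ, p <+: h ∧ p ∈ G.Info i q)).card

end EFG

namespace EFG

variable (G : EFG)

/-- Probability of the path from `h` to its extension `h'`. -/
def pth (σ : G.Profile) (h h' : List ℕ) : ℝ := G.prodAlong σ h (h'.drop h.length)

/-- One-step advantage term at a history. -/
def delta (i : Fin G.n) (σ τ : G.Profile) (h : List ℕ) : ℝ :=
  ∑ a ∈ G.A h, (G.moveProb σ h a - G.moveProb τ h a) * G.uExpFrom i τ (h ++ [a])

variable {G}

theorem mem_A {h : List ℕ} {a : ℕ} : a ∈ G.A h ↔ h ++ [a] ∈ G.H := by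
  unfold A
  rw [Finset.mem_filter]
  exact ⟨fun h => h.2, fun h' => ⟨G.act_mem _ _ h', h'⟩⟩

theorem pre_mem {h h' : List ℕ} (hh : h ++ h' ∈ G.H) : h ∈ G.H :=
  G.prefixClosed _ hh _ (List.prefix_append _ _)

theorem prodAlong_append (σ : G.Profile) (pre x y : List ℕ) :
    G.prodAlong σ pre (x ++ y) = G.prodAlong σ pre x * G.prodAlong σ (pre ++ x) y := by
  induction x generalizing pre with
  | nil => simp [prodAlong]
  | cons b x ih => simp [prodAlong, ih, mul_assoc]

theorem pth_append (σ : G.Profile) (h x : List ℕ) : G.pth σ h (h ++ x) = G.prodAlong σ h x := by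
  simp [pth]

theorem pth_self (σ : G.Profile) (h : List ℕ) : G.pth σ h h = 1 := by
  simp [pth, prodAlong]

theorem pth_trans (σ : G.Profile) {h h' h'' : List ℕ} (h1 : h <+: h') (h2 : h' <+: h'') :
    G.pth σ h h'' = G.pth σ h h' * G.pth σ h' h'' := by
  obtain ⟨x, rfl⟩ := h1
  obtain ⟨y, rfl⟩ := h2
  rw [pth_append, pth_append, List.append_assoc, pth_append, prodAlong_append]

theorem pth_step (σ : G.Profile) (h : List ℕ) (a : ℕ) :
    G.pth σ h (h ++ [a]) = G.moveProb σ h a := by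
  rw [pth_append]; simp [prodAlong]

theorem sum_split (S : Finset (List ℕ)) (hS : S ⊆ G.H) (h : List ℕ) (F : List ℕ → ℝ) :
    ∑ z ∈ S.filter (fun z => h <+: z), F z =
      (if h ∈ S then F h else 0) +
        ∑ a ∈ G.A h, ∑ z ∈ S.filter (fun z => h ++ [a] <+: z), F z := by
  have h1 : S.filter (fun z => h <+: z) =
      (S.filter (fun z => z = h)) ∪ (G.A h).biUnion (fun a => S.filter (fun z => h ++ [a] <+: z)) := by
    ext z
    simp only [Finset.mem_filter, Finset.mem_union, Finset.mem_biUnion]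
    constructor
    · rintro ⟨hz, x, rfl⟩
      cases x with
      | nil => left; simpa using hz
      | cons b x =>
        right
        refine ⟨b, ?_, hz, x, by simp⟩
        rw [mem_A]
        exact pre_mem (h' := x) (by simpa using hS hz)
    · rintro (⟨hz, rfl⟩ | ⟨a, _, hz, x, rfl⟩)
      · exact ⟨hz, List.prefix_refl _⟩
      · exact ⟨hz, ⟨a :: x, by simp⟩⟩
  rw [h1, Finset.sum_union, Finset.sum_biUnion]
  · congr 1
    rw [Finset.filter_eq']
    split_ifs <;> simp
  · intro a _ b _ hab
    rw [Function.onFun, Finset.disjoint_left]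
    intro z hz hz'
    simp only [Finset.mem_filter] at hz hz'
    obtain ⟨_, x, rfl⟩ := hz
    obtain ⟨_, y, hy⟩ := hz'
    simp at hy
    exact hab hy.1.symm
  · rw [Finset.disjoint_left]
    intro z hz hz'
    simp only [Finset.mem_filter, Finset.mem_biUnion] at hz hz'
    obtain ⟨a, _, _, x, hx⟩ := hz'
    rw [hz.2] at hx
    have := congrArg List.length hx
    simp at this

theorem Zset_sub : G.Zset ⊆ G.H := Finset.filter_subset _ _

theorem mem_Zset {h : List ℕ} : h ∈ G.Zset ↔ h ∈ G.H ∧ G.A h = ∅ := by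
  unfold Zset
  rw [Finset.mem_filter, Finset.eq_empty_iff_forall_notMem]
  simp only [mem_A]

theorem uExpFrom_eq (i : Fin G.n) (σ : G.Profile) (h : List ℕ) :
    G.uExpFrom i σ h = ∑ z ∈ G.Zset.filter (fun z => h <+: z), G.u i z * G.pth σ h z := rfl

theorem uExpFrom_step (i : Fin G.n) (σ : G.Profile) (h : List ℕ) (hA : (G.A h).Nonempty) :
    G.uExpFrom i σ h = ∑ a ∈ G.A h, G.moveProb σ h a * G.uExpFrom i σ (h ++ [a]) := by
  rw [uExpFrom_eq, sum_split _ Zset_sub, if_neg, zero_add]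
  · refine Finset.sum_congr rfl fun a _ => ?_
    rw [uExpFrom_eq, Finset.mul_sum]
    refine Finset.sum_congr rfl fun z hz => ?_
    rw [Finset.mem_filter] at hz
    rw [pth_trans σ (List.prefix_append h [a]) hz.2, pth_step]
    ring
  · intro hz
    rw [mem_Zset] at hz
    simp [hz.2] at hA

theorem uExpFrom_terminal (i : Fin G.n) (σ : G.Profile) (h : List ℕ) (hz : h ∈ G.Zset) :
    G.uExpFrom i σ h = G.u i h := by
  rw [uExpFrom_eq, sum_split _ Zset_sub, if_pos hz, (mem_Zset.1 hz).2, pth_self]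
  simp

/-- Performance difference identity. -/
theorem perf_diff (i : Fin G.n) (σ τ : G.Profile) (h : List ℕ) (hh : h ∈ G.H) :
    G.uExpFrom i σ h - G.uExpFrom i τ h =
      ∑ z ∈ G.H.filter (fun z => h <+: z), G.pth σ h z * G.delta i σ τ z := by
  obtain ⟨k, hk⟩ : ∃ k, G.H.sup List.length - h.length = k := ⟨_, rfl⟩
  induction k using Nat.strong_induction_on generalizing h with
  | _ k ih =>
  rw [sum_split _ (Finset.Subset.refl _), if_pos hh, pth_self, one_mul]
  rcases Finset.eq_empty_or_nonempty (G.A h) with hA | hA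
  · have hz : h ∈ G.Zset := mem_Zset.2 ⟨hh, hA⟩
    rw [uExpFrom_terminal i σ h hz, uExpFrom_terminal i τ h hz]
    simp [delta, hA]
  · rw [uExpFrom_step i σ h hA, uExpFrom_step i τ h hA, delta, ← Finset.sum_sub_distrib,
      ← Finset.sum_add_distrib]
    refine Finset.sum_congr rfl fun a ha => ?_
    have hm := mem_A.1 ha
    have hle : (h ++ [a]).length ≤ G.H.sup List.length := Finset.le_sup (f := List.length) hm
    have := ih (G.H.sup List.length - (h ++ [a]).length) (by
      rw [← hk]; rw [List.length_append, List.length_singleton] at *; omega) (h ++ [a]) hm rfl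
    have h2 : ∑ z ∈ G.H.filter (fun z => h ++ [a] <+: z), G.pth σ h z * G.delta i σ τ z
        = G.moveProb σ h a *
          ∑ z ∈ G.H.filter (fun z => h ++ [a] <+: z), G.pth σ (h ++ [a]) z * G.delta i σ τ z := by
      rw [Finset.mul_sum]
      refine Finset.sum_congr rfl fun z hz => ?_
      rw [Finset.mem_filter] at hz
      rw [pth_trans σ (List.prefix_append h [a]) hz.2, pth_step]
      ring
    rw [h2, ← this]
    ring

/-! Information sets. -/

theorem mem_Info {i : Fin G.n} {h : List ℕ} {a : ℕ} (hp : G.P h = some i) (hh : h ++ [a] ∈ G.H) :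
    G.infoIdx h < G.m i ∧ h ∈ G.Info i (G.infoIdx h) := by
  have h1 := pre_mem hh
  have h2 := G.infoIdx_lt i h h1 hp ⟨a, hh⟩
  exact ⟨h2, (G.info_spec i _ h h2).2 ⟨h1, hp, ⟨a, hh⟩, rfl⟩⟩

theorem infoA_eq {i : Fin G.n} {j : ℕ} (hj : j < G.m i) {h : List ℕ} (hh : h ∈ G.Info i j) :
    G.infoA i j = G.A h := by
  ext a
  unfold infoA
  rw [Finset.mem_sup]
  constructor
  · rintro ⟨h', h1, h2⟩
    rw [mem_A] at h2 ⊢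
    exact (G.info_actions i j hj h' h1 h hh a).1 h2
  · intro h1
    exact ⟨h, hh, h1⟩

theorem Info_of_act {i : Fin G.n} {j : ℕ} (hj : j < G.m i) {h : List ℕ} {a : ℕ}
    (ha : a ∈ G.infoA i j) (hh : h ++ [a] ∈ G.H) : h ∈ G.Info i j := by
  obtain ⟨h', hh'⟩ := G.info_nonempty i j hj
  rw [infoA_eq hj hh', mem_A] at ha
  have h1 := (G.info_spec i j h' hj).1 hh'
  have h2 := G.act_unique h h' a (pre_mem hh) h1.1 hh ha
  exact (G.info_spec i j h hj).2 ⟨pre_mem hh, h2.1.trans h1.2.1, ⟨a, hh⟩, h2.2.trans h1.2.2.2⟩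

theorem infoA_nonempty {i : Fin G.n} {j : ℕ} (hj : j < G.m i) : (G.infoA i j).Nonempty := by
  obtain ⟨h', hh'⟩ := G.info_nonempty i j hj
  obtain ⟨a, ha⟩ := ((G.info_spec i j h' hj).1 hh').2.2.1
  exact ⟨a, by rw [infoA_eq hj hh', mem_A]; exact ha⟩

theorem recordFrom_append (i : Fin G.n) (pre x y : List ℕ) :
    G.recordFrom i pre (x ++ y) = G.recordFrom i pre x ++ G.recordFrom i (pre ++ x) y := by
  induction x generalizing pre with
  | nil => simp [recordFrom]
  | cons b x ih => simp [recordFrom, ih]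

/-- No two distinct histories of an information set are nested. -/
theorem no_nest (hPR : G.PerfectRecall) {i : Fin G.n} {j : ℕ} (hj : j < G.m i)
    {h h' : List ℕ} (hh : h ∈ G.Info i j) (hh' : h' ∈ G.Info i j) (hp : h <+: h') : h = h' := by
  obtain ⟨x, rfl⟩ := hp
  have h1 := hPR i j hj _ hh _ hh'
  rw [recordFrom_append] at h1
  cases x with
  | nil => simp
  | cons b x =>
    have := congrArg List.length h1
    simp [recordFrom, ((G.info_spec i j h hj).1 hh).2.1] at this

/-- Perfect recall: if one history in `I_q` contains an action of `I_j`, so do all, and the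
record of `I_q` is longer. -/
theorem record_mem {i : Fin G.n} {j : ℕ} (hj : j < G.m i) {h : List ℕ} (hh : h ∈ G.H) {a : ℕ}
    (ha : a ∈ G.infoA i j) (hm : a ∈ h) : ∃ g x, g ∈ G.Info i j ∧ h = g ++ a :: x := by
  obtain ⟨g, x, rfl⟩ := List.append_of_mem hm
  exact ⟨g, x, Info_of_act hj ha (pre_mem (h' := x) (by simpa using hh)), rfl⟩

theorem record_len (hPR : G.PerfectRecall) {i : Fin G.n} {j q : ℕ} (hj : j < G.m i) (hq : q < G.m i)
    {h : List ℕ} (hh : h ∈ G.Info i q) {a : ℕ} (ha : a ∈ G.infoA i j) (hm : a ∈ h)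
    {p g : List ℕ} (hp : p ∈ G.Info i q) (hg : g ∈ G.Info i j) :
    (G.recordFrom i [] g).length < (G.recordFrom i [] p).length := by
  obtain ⟨g', x, hg', rfl⟩ := record_mem hj ((G.info_spec i q h hq).1 hh).1 ha hm
  rw [hPR i q hq p hp _ hh, hPR i j hj g hg _ hg', recordFrom_append]
  simp [recordFrom, ((G.info_spec i j g' hj).1 hg').2.1]

end EFG

namespace EFG

variable {G : EFG}

theorem prodAlong_congr (σ τ : G.Profile) (pre x : List ℕ)
    (hc : ∀ p b, pre <+: p → p ++ [b] <+: pre ++ x → G.moveProb σ p b = G.moveProb τ p b) :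
    G.prodAlong σ pre x = G.prodAlong τ pre x := by
  induction x generalizing pre with
  | nil => simp [prodAlong]
  | cons b x ih =>
    simp only [prodAlong]
    rw [hc pre b (List.prefix_refl _) ⟨x, by simp⟩, ih (pre ++ [b])]
    intro p c hp hpc
    exact hc p c ((List.prefix_append _ _).trans hp) (by simpa using hpc)

theorem prodAlongNot_congr (i : Fin G.n) (σ τ : G.Profile) (hc : ∀ p, p ≠ i → σ p = τ p)
    (pre x : List ℕ) : G.prodAlongNot i σ pre x = G.prodAlongNot i τ pre x := by
  induction x generalizing pre with
  | nil => simp [prodAlongNot]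
  | cons b x ih =>
    simp only [prodAlongNot]
    rw [ih]
    congr 1
    split_ifs with h
    · rfl
    · unfold moveProb
      cases hP : G.P pre with
      | none => rfl
      | some p =>
        simp only [Option.elim]
        rw [hc p]
        rintro rfl
        exact h hP

/-- The own part of a path probability only depends on the record. -/
theorem prodAlong_own (i : Fin G.n) (σ : G.Profile) (pre x : List ℕ) :
    G.prodAlong σ pre x =
      ((G.recordFrom i pre x).map (fun t => σ i t.1 t.2)).prod * G.prodAlongNot i σ pre x := by
  induction x generalizing pre with
  | nil => simp [prodAlong, prodAlongNot, recordFrom]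
  | cons b x ih =>
    simp only [prodAlong, prodAlongNot, recordFrom]
    rw [ih]
    split_ifs with h
    · simp [moveProb, h]; ring
    · simp; ring

theorem moveProb_nonneg {σ : G.Profile} (hσ : G.IsBehProfile σ) {h : List ℕ} {a : ℕ}
    (hh : h ++ [a] ∈ G.H) : 0 ≤ G.moveProb σ h a := by
  unfold moveProb
  cases hP : G.P h with
  | none => exact G.fc_nonneg h a
  | some i =>
    obtain ⟨h1, h2⟩ := mem_Info hP hh
    refine (hσ i _ h1).1 a ?_
    rw [infoA_eq h1 h2, mem_A]
    exact hh

theorem prodAlong_nonneg {σ : G.Profile} (hσ : G.IsBehProfile σ) (pre x : List ℕ)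
    (hh : pre ++ x ∈ G.H) : 0 ≤ G.prodAlong σ pre x := by
  induction x generalizing pre with
  | nil => simp [prodAlong]
  | cons b x ih =>
    simp only [prodAlong]
    have h1 : pre ++ [b] ++ x ∈ G.H := by simpa using hh
    exact mul_nonneg (moveProb_nonneg hσ (pre_mem h1)) (ih _ h1)

theorem pth_nonneg {σ : G.Profile} (hσ : G.IsBehProfile σ) {h h' : List ℕ} (hp : h <+: h')
    (hh : h' ∈ G.H) : 0 ≤ G.pth σ h h' := by
  obtain ⟨x, rfl⟩ := hp
  rw [pth_append]
  exact prodAlong_nonneg hσ _ _ hh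

theorem prodAlongNot_nonneg (i : Fin G.n) {σ : G.Profile} (hσ : G.IsBehProfile σ) (pre x : List ℕ)
    (hh : pre ++ x ∈ G.H) : 0 ≤ G.prodAlongNot i σ pre x := by
  induction x generalizing pre with
  | nil => simp [prodAlongNot]
  | cons b x ih =>
    simp only [prodAlongNot]
    have h1 : pre ++ [b] ++ x ∈ G.H := by simpa using hh
    refine mul_nonneg ?_ (ih _ h1)
    split_ifs
    · exact zero_le_one
    · exact moveProb_nonneg hσ (pre_mem h1)

theorem replace_beh {β : G.Profile} (hβ : G.IsBehProfile β) {i : Fin G.n} {b : ℕ → ℕ → ℝ}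
    (hb : G.IsBehStrategy i b) : G.IsBehProfile (G.replace β i b) := by
  intro p
  unfold replace
  split_ifs with h
  · subst h; exact hb
  · exact hβ p

theorem replace_self (β : G.Profile) (i : Fin G.n) : G.replace β i (β i) = β := by
  funext p
  unfold replace
  split_ifs with h
  · subst h; rfl
  · rfl

theorem moveProb_rho_after (i : Fin G.n) {j : ℕ} (β βt : G.Profile) {a : ℕ}
    (ha : a ∈ G.infoA i j) {p : List ℕ} {b : ℕ} (hp : p ++ [b] ∈ G.H) (hm : a ∈ p) :
    G.moveProb (G.rho i j β βt) p b = G.moveProb (G.replace β i (βt i)) p b := by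
  unfold moveProb
  cases hP : G.P p with
  | none => rfl
  | some k =>
    simp only [Option.elim, rho, replace]
    by_cases hk : k = i
    · subst hk
      rw [if_pos, if_pos rfl]
      exact ⟨rfl, p, (mem_Info hP hp).2, a, hm, ha⟩
    · rw [if_neg, if_neg hk]
      exact fun h => hk h.1

theorem moveProb_rho_before (hPR : G.PerfectRecall) {i : Fin G.n} {j : ℕ} (hj : j < G.m i)
    (β βt : G.Profile) {h p : List ℕ} {b : ℕ} (hh : h ∈ G.Info i j) (hp : p ++ [b] <+: h) :
    G.moveProb (G.rho i j β βt) p b = G.moveProb β p b := by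
  have hH := ((G.info_spec i j h hj).1 hh).1
  have hpH := G.prefixClosed _ hH _ hp
  unfold moveProb
  cases hP : G.P p with
  | none => rfl
  | some k =>
    simp only [Option.elim, rho]
    rw [if_neg]
    rintro ⟨rfl, g, hg, c, hc, hca⟩
    obtain ⟨h1, h2⟩ := mem_Info hP hpH
    have h3 := record_len hPR hj h1 hg hca hc h2 hh
    obtain ⟨y, rfl⟩ := hp
    rw [List.append_assoc, recordFrom_append, List.length_append] at h3
    omega

theorem sum_act (hPR : G.PerfectRecall) {i : Fin G.n} {j : ℕ} (hj : j < G.m i) {a : ℕ}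
    (ha : a ∈ G.infoA i j) (F : List ℕ → ℝ) :
    ∑ z ∈ G.Zset.filter (fun z => a ∈ z), F z =
      ∑ h ∈ G.Info i j, ∑ z ∈ G.Zset.filter (fun z => h ++ [a] <+: z), F z := by
  rw [← Finset.sum_biUnion]
  · refine Finset.sum_congr ?_ fun _ _ => rfl
    ext z
    simp only [Finset.mem_filter, Finset.mem_biUnion]
    constructor
    · rintro ⟨hz, hm⟩
      obtain ⟨g, x, hg, rfl⟩ := record_mem hj (Zset_sub hz) ha hm
      exact ⟨g, hg, hz, x, by simp⟩
    · rintro ⟨g, hg, hz, x, rfl⟩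
      exact ⟨hz, by simp⟩
  · intro g hg g' hg' hne
    rw [Function.onFun, Finset.disjoint_left]
    intro z hz hz'
    rw [Finset.mem_filter] at hz hz'
    have h1 := (List.prefix_append g [a]).trans hz.2
    have h2 := (List.prefix_append g' [a]).trans hz'.2
    rcases List.prefix_or_prefix_of_prefix h1 h2 with h | h
    · exact hne (no_nest hPR hj hg hg' h)
    · exact hne (no_nest hPR hj hg' hg h).symm

theorem nuAux_eq (i : Fin G.n) (j : ℕ) (σ : G.Profile) (w : List ℕ → ℝ) (pre x : List ℕ) (a : ℕ)
    (rest : List ℕ) (hx : pre ++ x ∈ G.Info i j)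
    (hn : ∀ p, p ∈ G.Info i j → p <+: pre ++ x → p = pre ++ x) :
    G.nuAux i j σ w pre (x ++ a :: rest) =
      w (pre ++ x) * G.prodAlong σ (pre ++ x ++ [a]) rest := by
  induction x generalizing pre with
  | nil =>
    simp only [List.append_nil] at hx
    simp [nuAux, hx]
  | cons b x ih =>
    have h1 : pre ∉ G.Info i j := by
      intro h
      have := congrArg List.length (hn pre h (List.prefix_append _ _))
      simp at this
    simp only [List.cons_append, nuAux, if_neg h1]
    rw [ih (pre ++ [b]) (by simpa using hx) (by simpa using hn)]
    simp

theorem skip_append (i : Fin G.n) (j : ℕ) (σ : G.Profile) (pre x y : List ℕ) :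
    G.prodAlongSkip i j σ pre (x ++ y) =
      G.prodAlongSkip i j σ pre x * G.prodAlongSkip i j σ (pre ++ x) y := by
  induction x generalizing pre with
  | nil => simp [prodAlongSkip]
  | cons b x ih => simp [prodAlongSkip, ih, mul_assoc]

theorem skip_eq (i : Fin G.n) (j : ℕ) (σ : G.Profile) (pre x : List ℕ)
    (hc : ∀ p b, pre <+: p → p ++ [b] <+: pre ++ x → p ∉ G.Info i j) :
    G.prodAlongSkip i j σ pre x = G.prodAlong σ pre x := by
  induction x generalizing pre with
  | nil => simp [prodAlong, prodAlongSkip]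
  | cons b x ih =>
    simp only [prodAlong, prodAlongSkip]
    rw [if_neg (hc pre b (List.prefix_refl _) ⟨x, by simp⟩), ih (pre ++ [b])]
    intro p c hp hpc
    exact hc p c ((List.prefix_append _ _).trans hp) (by simpa using hpc)

theorem pth_rho_after (i : Fin G.n) {j : ℕ} (β βt : G.Profile) {a : ℕ}
    (ha : a ∈ G.infoA i j) {h z : List ℕ} (hz : z ∈ G.H) (hp : h ++ [a] <+: z) :
    G.pth (G.rho i j β βt) (h ++ [a]) z = G.pth (G.replace β i (βt i)) (h ++ [a]) z := by
  obtain ⟨x, rfl⟩ := hp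
  rw [pth_append, pth_append]
  refine prodAlong_congr _ _ _ _ fun p b hp hpb => ?_
  refine moveProb_rho_after i β βt ha (G.prefixClosed _ hz _ hpb) ?_
  exact hp.subset (by simp)

theorem uCond_eq (hPR : G.PerfectRecall) {i : Fin G.n} {j : ℕ} (hj : j < G.m i) {a : ℕ}
    (ha : a ∈ G.infoA i j) (β βt : G.Profile) (μ : G.Belief) :
    G.uCond i j a (G.rho i j β βt) μ =
      ∑ h ∈ G.Info i j, μ i j h * G.uExpFrom i (G.replace β i (βt i)) (h ++ [a]) := by
  unfold uCond
  rw [sum_act hPR hj ha]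
  refine Finset.sum_congr rfl fun h hh => ?_
  rw [uExpFrom_eq, Finset.mul_sum]
  refine Finset.sum_congr rfl fun z hz => ?_
  rw [Finset.mem_filter] at hz
  rw [← pth_rho_after i β βt ha (Zset_sub hz.1) hz.2]
  obtain ⟨_, x, rfl⟩ := hz
  rw [pth_append]
  unfold nu
  have := nuAux_eq i j (G.rho i j β βt) (μ i j) [] h a x hh
    (fun p hp hp' => no_nest hPR hj hp hh hp')
  simp only [List.nil_append] at this
  rw [List.append_assoc, List.singleton_append, this]
  ring

theorem root_nil : G.IsSubgameRoot [] :=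
  ⟨G.empty_mem, fun _ _ _ => Or.inl fun _ _ => List.nil_prefix⟩

theorem exists_root {i : Fin G.n} {j : ℕ} (hj : j < G.m i) :
    ∃ r, G.IsSubgameRoot r ∧ (∀ h ∈ G.Info i j, r <+: h) ∧ r.length = G.sgDepthInfo i j ∧
      ∀ r', G.IsSubgameRoot r' → (∀ h ∈ G.Info i j, r' <+: h) → r' <+: r := by
  have hne : (G.H.filter fun r => G.IsSubgameRoot r ∧ ∀ h ∈ G.Info i j, r <+: h).Nonempty :=
    ⟨[], by
      rw [Finset.mem_filter]
      exact ⟨G.empty_mem, root_nil, fun _ _ => List.nil_prefix⟩⟩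
  obtain ⟨r, hr, hl⟩ := Finset.exists_mem_eq_sup _ hne List.length
  rw [Finset.mem_filter] at hr
  refine ⟨r, hr.2.1, hr.2.2, hl.symm, fun r' h1 h2 => ?_⟩
  obtain ⟨h, hh⟩ := G.info_nonempty i j hj
  refine List.prefix_of_prefix_length_le (h2 h hh) (hr.2.2 h hh) ?_
  rw [← hl]
  exact Finset.le_sup (f := List.length) (Finset.mem_filter.2 ⟨h1.1, h1, h2⟩)

theorem uDiamond_eq (hPR : G.PerfectRecall) {i : Fin G.n} {j : ℕ} (hj : j < G.m i) {a : ℕ}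
    (ha : a ∈ G.infoA i j) (β βt : G.Profile) {r : List ℕ} (hr : ∀ h ∈ G.Info i j, r <+: h)
    (hl : r.length = G.sgDepthInfo i j) :
    G.uDiamondAct i j a (G.rho i j β βt) =
      ∑ h ∈ G.Info i j, G.pth β r h * G.uExpFrom i (G.replace β i (βt i)) (h ++ [a]) := by
  unfold uDiamondAct
  rw [sum_act hPR hj ha]
  refine Finset.sum_congr rfl fun h hh => ?_
  rw [uExpFrom_eq, Finset.mul_sum]
  refine Finset.sum_congr rfl fun z hz => ?_
  rw [Finset.mem_filter] at hz
  rw [← pth_rho_after i β βt ha (Zset_sub hz.1) hz.2, ← hl]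
  obtain ⟨hzZ, x, rfl⟩ := hz
  obtain ⟨y, rfl⟩ := hr h hh
  rw [pth_append, pth_append]
  have h1 : (r ++ y ++ [a] ++ x).take r.length = r := by simp
  have h2 : (r ++ y ++ [a] ++ x).drop r.length = y ++ ([a] ++ x) := by simp
  rw [h1, h2, skip_append, skip_append, skip_eq i j _ r y, skip_eq i j _ (r ++ y ++ [a]) x]
  · have h3 : G.prodAlongSkip i j (G.rho i j β βt) (r ++ y) [a] = 1 := by
      simp [prodAlongSkip, hh]
    have h4 : G.prodAlong (G.rho i j β βt) r y = G.prodAlong β r y :=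
      prodAlong_congr _ _ _ _ fun p b _ hpb => moveProb_rho_before hPR hj β βt hh hpb
    rw [h3, h4]
    ring
  · intro p b hp _ hpI
    have := no_nest hPR hj hh hpI ((List.prefix_append _ _).trans hp)
    have h5 := hp.length_le
    rw [← this] at h5
    simp at h5
  · intro p b _ hp hpI
    have := no_nest hPR hj hpI hh ((List.prefix_append _ _).trans hp)
    have h5 := hp.length_le
    rw [← this] at h5
    simp at h5

/-- Payoff difference in a subgame, grouped by information sets. -/
theorem sub_diff (i : Fin G.n) (β : G.Profile) (b bt : ℕ → ℕ → ℝ) {r : List ℕ}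
    (hr : G.IsSubgameRoot r) :
    G.uExpFrom i (G.replace β i b) r - G.uExpFrom i (G.replace β i bt) r =
      ∑ j ∈ (Finset.range (G.m i)).filter (fun j => ∀ h ∈ G.Info i j, r <+: h),
        ∑ a ∈ G.infoA i j, (b j a - bt j a) *
          ∑ h ∈ G.Info i j, G.pth (G.replace β i b) r h *
            G.uExpFrom i (G.replace β i bt) (h ++ [a]) := by
  rw [perf_diff i _ _ r hr.1]
  set J := (Finset.range (G.m i)).filter (fun j => ∀ h ∈ G.Info i j, r <+: h) with hJ
  have hsub : J.biUnion (fun j => G.Info i j) ⊆ G.H.filter (fun z => r <+: z) := by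
    intro h hh
    rw [Finset.mem_biUnion] at hh
    obtain ⟨j, hj, hh⟩ := hh
    rw [hJ, Finset.mem_filter, Finset.mem_range] at hj
    rw [Finset.mem_filter]
    exact ⟨((G.info_spec i j h hj.1).1 hh).1, hj.2 h hh⟩
  rw [← Finset.sum_subset hsub, Finset.sum_biUnion]
  · refine Finset.sum_congr rfl fun j hj => ?_
    rw [hJ, Finset.mem_filter, Finset.mem_range] at hj
    simp only [Finset.mul_sum]
    rw [Finset.sum_comm]
    refine Finset.sum_congr rfl fun h hh => ?_
    rw [infoA_eq hj.1 hh, delta, Finset.mul_sum]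
    refine Finset.sum_congr rfl fun a _ => ?_
    have h1 := (G.info_spec i j h hj.1).1 hh
    simp only [moveProb, h1.2.1, h1.2.2.2, Option.elim, replace, if_true]
    ring
  · intro j hj j' hj' hne
    rw [Function.onFun, Finset.disjoint_left]
    intro h hh hh'
    have hj1 : j < G.m i := by
      have := (Finset.mem_filter.1 hj).1
      exact Finset.mem_range.1 this
    have hj2 : j' < G.m i := by
      have := (Finset.mem_filter.1 hj').1
      exact Finset.mem_range.1 this
    exact hne (((G.info_spec i j h hj1).1 hh).2.2.2.symm.trans
      ((G.info_spec i j' h hj2).1 hh').2.2.2)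
  · intro h hh hnot
    rw [Finset.mem_filter] at hh
    have : G.delta i (G.replace β i b) (G.replace β i bt) h = 0 := by
      unfold delta
      refine Finset.sum_eq_zero fun a ha => ?_
      rw [mem_A] at ha
      have : G.moveProb (G.replace β i b) h a = G.moveProb (G.replace β i bt) h a := by
        unfold moveProb
        cases hP : G.P h with
        | none => rfl
        | some k =>
          simp only [Option.elim, replace]
          by_cases hk : k = i
          · subst hk
            exfalso
            obtain ⟨h1, h2⟩ := mem_Info hP ha
            apply hnot
            rw [Finset.mem_biUnion]
            refine ⟨G.infoIdx h, ?_, h2⟩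
            rw [hJ, Finset.mem_filter, Finset.mem_range]
            refine ⟨h1, (hr.2 k _ h1).resolve_right fun h3 => h3 h h2 hh.2⟩
          · rw [if_neg hk, if_neg hk]
      rw [this]; ring
    rw [this, mul_zero]

/-- Path probabilities to the histories of an information set are proportional to beliefs. -/
theorem pth_belief (hPR : G.PerfectRecall) {β : G.Profile} (hβ : G.IsBehProfile β) {μ : G.Belief}
    (hμ : G.IsBelief μ) (hY : G.YConsistent β μ) {i : Fin G.n} {j : ℕ} (hj : j < G.m i)
    {b : ℕ → ℕ → ℝ} (hb : G.IsBehStrategy i b) {r : List ℕ} (hr : G.IsSubgameRoot r)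
    (hrI : ∀ h ∈ G.Info i j, r <+: h) :
    ∃ c : ℝ, 0 ≤ c ∧ ∀ h ∈ G.Info i j, G.pth (G.replace β i b) r h = c * μ i j h := by
  have hσ := replace_beh hβ hb
  obtain ⟨h0, hh0⟩ := G.info_nonempty i j hj
  have hH : ∀ h ∈ G.Info i j, h ∈ G.H := fun h hh => ((G.info_spec i j h hj).1 hh).1
  by_cases hs : ∀ h ∈ G.Info i j, h = h0
  · refine ⟨G.pth (G.replace β i b) r h0, pth_nonneg hσ (hrI _ hh0) (hH _ hh0), ?_⟩
    intro h hh
    have h1 : G.Info i j = {h0} := by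
      ext x
      rw [Finset.mem_singleton]
      exact ⟨hs x, fun hx => hx ▸ hh0⟩
    have h2 := (hμ i j hj).2
    rw [h1, Finset.sum_singleton] at h2
    rw [hs h hh, h2, mul_one]
  · push Not at hs
    obtain ⟨h1, hh1, hne⟩ := hs
    -- a root preceding some history of the set precedes all of them strictly
    have key : ∀ q, G.IsSubgameRoot q → ∀ h ∈ G.Info i j, q <+: h → ∀ h' ∈ G.Info i j,
        q <+: h'.dropLast := by
      intro q hq h hh hqh h' hh'
      have hall := (hq.2 i j hj).resolve_right fun h3 => h3 h hh hqh
      obtain ⟨y, hy⟩ := hall h' hh'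
      rcases List.eq_nil_or_concat y with rfl | ⟨y', c, rfl⟩
      · exfalso
        rw [List.append_nil] at hy
        subst hy
        have e0 := no_nest hPR hj hh' hh0 (hall _ hh0)
        have e1 := no_nest hPR hj hh' hh1 (hall _ hh1)
        exact hne (e1.symm.trans e0)
      · rw [← hy]
        refine ⟨y', ?_⟩
        simp [← List.append_assoc]
    have hfil : ∀ h ∈ G.Info i j, (G.H.filter fun q => G.IsSubgameRoot q ∧ q <+: h.dropLast) =
        (G.H.filter fun q => G.IsSubgameRoot q ∧ q <+: h0.dropLast) := by
      intro h hh
      ext q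
      simp only [Finset.mem_filter]
      constructor
      · rintro ⟨a1, a2, a3⟩
        exact ⟨a1, a2, key q a2 h hh (a3.trans (List.dropLast_prefix _)) h0 hh0⟩
      · rintro ⟨a1, a2, a3⟩
        exact ⟨a1, a2, key q a2 h0 hh0 (a3.trans (List.dropLast_prefix _)) h hh⟩
    have hne' : (G.H.filter fun q => G.IsSubgameRoot q ∧ q <+: h0.dropLast).Nonempty :=
      ⟨[], by rw [Finset.mem_filter]; exact ⟨G.empty_mem, root_nil, List.nil_prefix⟩⟩
    obtain ⟨q, hq, hql⟩ := Finset.exists_mem_eq_sup _ hne' List.length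
    rw [Finset.mem_filter] at hq
    have hdep : ∀ h ∈ G.Info i j, G.sgDepthHist h = q.length := by
      intro h hh
      unfold sgDepthHist
      rw [hfil h hh, hql]
    have hqI : ∀ h ∈ G.Info i j, q <+: h := fun h hh =>
      (key q hq.2.1 h0 hh0 (hq.2.2.trans (List.dropLast_prefix _)) h hh).trans
        (List.dropLast_prefix _)
    have hrq : r <+: q := by
      refine List.prefix_of_prefix_length_le (hrI h0 hh0) (hqI h0 hh0) ?_
      rw [← hql]
      exact Finset.le_sup (f := List.length) (Finset.mem_filter.2
        ⟨hr.1, hr, key r hr h0 hh0 (hrI h0 hh0) h0 hh0⟩)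
    have hYh : ∀ h ∈ G.Info i j, G.Yh i β h = G.prodAlongNot i β q (h.drop q.length) := by
      intro h hh
      unfold Yh
      rw [hdep h hh]
      obtain ⟨y, rfl⟩ := hqI h hh
      simp
    have hYnn : ∀ h ∈ G.Info i j, 0 ≤ G.Yh i β h := by
      intro h hh
      rw [hYh h hh]
      apply prodAlongNot_nonneg i hβ
      obtain ⟨y, rfl⟩ := hqI h hh
      simpa using hH _ hh
    have hYI : 0 ≤ G.YInfo i j β := Finset.sum_nonneg hYnn
    have hrec : ∀ h ∈ G.Info i j, G.recordFrom i q (h.drop q.length) =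
        G.recordFrom i q (h0.drop q.length) := by
      intro h hh
      have e := hPR i j hj h hh h0 hh0
      obtain ⟨y, hy⟩ := hqI h hh
      obtain ⟨y0, hy0⟩ := hqI h0 hh0
      rw [← hy, ← hy0, recordFrom_append, recordFrom_append] at e
      rw [← hy, ← hy0, List.drop_left, List.drop_left]
      simpa using e
    set own := ((G.recordFrom i q (h0.drop q.length)).map
      (fun t => (G.replace β i b) i t.1 t.2)).prod with hown
    have hform : ∀ h ∈ G.Info i j, G.pth (G.replace β i b) r h =
        G.pth (G.replace β i b) r q * own * G.YInfo i j β * μ i j h := by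
      intro h hh
      rw [pth_trans _ hrq (hqI h hh), pth, pth, prodAlong_own i _ q, hrec h hh, mul_assoc _ _ (μ i j h),
        hY i j hj h hh, hYh h hh, prodAlongNot_congr i (G.replace β i b) β, mul_assoc]
      intro p hp
      simp [replace, hp]
    by_cases hpos : ∃ h ∈ G.Info i j, 0 < μ i j h
    · obtain ⟨h, hh, hp⟩ := hpos
      refine ⟨_, ?_, hform⟩
      have h5 := pth_nonneg hσ (hrI h hh) (hH h hh)
      rw [hform h hh] at h5
      exact nonneg_of_mul_nonneg_left h5 hp
    · refine ⟨0, le_refl _, fun h hh => ?_⟩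
      have : μ i j h = 0 := le_antisymm (not_lt.1 fun hp => hpos ⟨h, hh, hp⟩) ((hμ i j hj).1 h hh)
      rw [hform h hh, this]; simp

end EFG

namespace EFG

variable {G : EFG}

theorem arg_eq {s : Finset ℕ} {f p : ℕ → ℝ} (hp1 : ∑ a ∈ s, p a = 1)
    (hs : ∀ a' ∈ s, ∀ a'' ∈ s, f a' < f a'' → p a' = 0) {m : ℕ} (hm : m ∈ s)
    (hmax : ∀ a ∈ s, f a ≤ f m) : ∑ a ∈ s, p a * f a = f m := by
  have : ∑ a ∈ s, p a * f a = ∑ a ∈ s, p a * f m := by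
    refine Finset.sum_congr rfl fun a ha => ?_
    rcases (hmax a ha).lt_or_eq with h | h
    · rw [hs a ha m hm h]; simp
    · rw [h]
  rw [this, ← Finset.sum_mul, hp1, one_mul]

theorem arg_le {s : Finset ℕ} (hne : s.Nonempty) {f p q : ℕ → ℝ} (hp1 : ∑ a ∈ s, p a = 1)
    (hs : ∀ a' ∈ s, ∀ a'' ∈ s, f a' < f a'' → p a' = 0)
    (hq0 : ∀ a ∈ s, 0 ≤ q a) (hq1 : ∑ a ∈ s, q a = 1) :
    ∑ a ∈ s, q a * f a ≤ ∑ a ∈ s, p a * f a := by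
  obtain ⟨m, hm, hmax⟩ := Finset.exists_max_image s f hne
  rw [arg_eq hp1 hs hm hmax]
  calc ∑ a ∈ s, q a * f a ≤ ∑ a ∈ s, q a * f m :=
        Finset.sum_le_sum fun a ha => mul_le_mul_of_nonneg_left (hmax a ha) (hq0 a ha)
    _ = f m := by rw [← Finset.sum_mul, hq1, one_mul]

theorem arg_supp {s : Finset ℕ} (hne : s.Nonempty) {f p q : ℕ → ℝ} (hp1 : ∑ a ∈ s, p a = 1)
    (hs : ∀ a' ∈ s, ∀ a'' ∈ s, f a' < f a'' → p a' = 0)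
    (hq0 : ∀ a ∈ s, 0 ≤ q a) (hq1 : ∑ a ∈ s, q a = 1)
    (hle : ∑ a ∈ s, p a * f a ≤ ∑ a ∈ s, q a * f a) :
    ∀ a' ∈ s, ∀ a'' ∈ s, f a' < f a'' → q a' = 0 := by
  obtain ⟨m, hm, hmax⟩ := Finset.exists_max_image s f hne
  rw [arg_eq hp1 hs hm hmax] at hle
  intro a' ha' a'' ha'' hlt
  have h1 : ∑ a ∈ s, q a * (f m - f a) ≤ 0 := by
    simp only [mul_sub, Finset.sum_sub_distrib, ← Finset.sum_mul, hq1]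
    linarith
  have hnn : ∀ a ∈ s, 0 ≤ q a * (f m - f a) := fun a ha =>
    mul_nonneg (hq0 a ha) (sub_nonneg.2 (hmax a ha))
  have h2 := (Finset.sum_eq_zero_iff_of_nonneg hnn).1 (le_antisymm h1 (Finset.sum_nonneg hnn)) a' ha'
  rcases mul_eq_zero.1 h2 with h | h
  · exact h
  · have := hmax a'' ha''
    linarith

theorem Yh_nonneg {β : G.Profile} (hβ : G.IsBehProfile β) (i : Fin G.n) {h : List ℕ}
    (hh : h ∈ G.H) : 0 ≤ G.Yh i β h := by
  unfold Yh
  apply prodAlongNot_nonneg i hβ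
  rw [List.take_append_drop]
  exact hh

theorem exists_belief {β : G.Profile} (hβ : G.IsBehProfile β) :
    ∃ μ : G.Belief, G.IsBelief μ ∧ G.YConsistent β μ := by
  refine ⟨fun i j h => if G.YInfo i j β = 0 then ((G.Info i j).card : ℝ)⁻¹
    else G.Yh i β h / G.YInfo i j β, ?_, ?_⟩
  · intro i j hj
    have hnn : ∀ h ∈ G.Info i j, 0 ≤ G.Yh i β h := fun h hh =>
      Yh_nonneg hβ i ((G.info_spec i j h hj).1 hh).1
    have hYI : 0 ≤ G.YInfo i j β := Finset.sum_nonneg hnn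
    constructor
    · intro h hh
      dsimp only
      split_ifs
      · positivity
      · exact div_nonneg (hnn h hh) hYI
    · dsimp only
      split_ifs with h0
      · rw [Finset.sum_const, nsmul_eq_mul]
        have := (G.info_nonempty i j hj).card_pos
        field_simp
      · rw [← Finset.sum_div]
        exact div_self h0
  · intro i j hj h hh
    have hnn : ∀ h ∈ G.Info i j, 0 ≤ G.Yh i β h := fun h hh =>
      Yh_nonneg hβ i ((G.info_spec i j h hj).1 hh).1
    dsimp only
    split_ifs with h0
    · rw [h0, zero_mul]
      exact ((Finset.sum_eq_zero_iff_of_nonneg hnn).1 h0 h hh).symm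
    · field_simp

/-- Number of own moves before an information set. -/
def dep (G : EFG) (i : Fin G.n) (j : ℕ) : ℕ :=
  (G.Info i j).sup fun h => (G.recordFrom i [] h).length

theorem dep_eq (hPR : G.PerfectRecall) {i : Fin G.n} {j : ℕ} (hj : j < G.m i) {h : List ℕ}
    (hh : h ∈ G.Info i j) : G.dep i j = (G.recordFrom i [] h).length := by
  unfold dep
  apply le_antisymm
  · refine Finset.sup_le fun g hg => ?_
    rw [hPR i j hj g hg h hh]
  · exact Finset.le_sup (f := fun h => (G.recordFrom i [] h).length) hh

theorem exists_seq (hPR : G.PerfectRecall) {β : G.Profile} (hβ : G.IsBehProfile β)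
    (μ : G.Belief) : ∃ βt : G.Profile, G.IsBehProfile βt ∧
      ∀ (i : Fin G.n) (j : ℕ), j < G.m i → ∀ a' ∈ G.infoA i j, ∀ a'' ∈ G.infoA i j,
        G.uCond i j a' (G.rho i j β βt) μ < G.uCond i j a'' (G.rho i j β βt) μ →
        βt i j a' = 0 := by
  set N := (Finset.univ.sup fun i => (Finset.range (G.m i)).sup (G.dep i)) + 1 with hN
  have hlt : ∀ i j, j < G.m i → G.dep i j < N := by
    intro i j hj
    have h1 : G.dep i j ≤ (Finset.range (G.m i)).sup (G.dep i) :=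
      Finset.le_sup (f := G.dep i) (Finset.mem_range.2 hj)
    have h2 := Finset.le_sup (f := fun i => (Finset.range (G.m i)).sup (G.dep i))
      (Finset.mem_univ i)
    try dsimp only at h2
    omega
  suffices H : ∀ k, ∃ βt : G.Profile, G.IsBehProfile βt ∧
      ∀ (i : Fin G.n) (j : ℕ), j < G.m i → N ≤ G.dep i j + k →
        ∀ a' ∈ G.infoA i j, ∀ a'' ∈ G.infoA i j,
        G.uCond i j a' (G.rho i j β βt) μ < G.uCond i j a'' (G.rho i j β βt) μ →
        βt i j a' = 0 by
    obtain ⟨βt, h1, h2⟩ := H N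
    exact ⟨βt, h1, fun i j hj => h2 i j hj (by omega)⟩
  intro k
  induction k with
  | zero =>
    refine ⟨β, hβ, fun i j hj hd => ?_⟩
    have := hlt i j hj
    omega
  | succ k ih =>
    obtain ⟨βt, h1, h2⟩ := ih
    have hmx : ∀ i j, ∃ m, j < G.m i → m ∈ G.infoA i j ∧ ∀ a ∈ G.infoA i j,
        G.uCond i j a (G.rho i j β βt) μ ≤ G.uCond i j m (G.rho i j β βt) μ := by
      intro i j
      by_cases hj : j < G.m i
      · obtain ⟨m, hm⟩ := Finset.exists_max_image (G.infoA i j)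
          (fun a => G.uCond i j a (G.rho i j β βt) μ) (infoA_nonempty hj)
        exact ⟨m, fun _ => hm⟩
      · exact ⟨0, fun h => absurd h hj⟩
    choose M hM using hmx
    set βn : G.Profile := fun i j => if j < G.m i ∧ G.dep i j + k + 1 = N then
      (fun a => if a = M i j then 1 else 0) else βt i j with hβn
    have hrho : ∀ i j, j < G.m i → N ≤ G.dep i j + (k + 1) →
        G.rho i j β βn = G.rho i j β βt := by
      intro i j hj hd
      funext p q
      unfold rho
      split_ifs with hc
      · obtain ⟨_, h, hh, c, hc, hca⟩ := hc
        rw [hβn]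
        dsimp only
        rw [if_neg]
        rintro ⟨hq, hdq⟩
        obtain ⟨g, hg⟩ := G.info_nonempty i j hj
        have := record_len hPR hj hq hh hca hc hh hg
        rw [← dep_eq hPR hj hg, ← dep_eq hPR hq hh] at this
        omega
      · rfl
    refine ⟨βn, ?_, ?_⟩
    · intro i j hj
      rw [hβn]
      dsimp only
      split_ifs with hc
      · constructor
        · intro a _
          dsimp only
          split_ifs <;> norm_num
        · rw [Finset.sum_ite_eq', if_pos (hM i j hj).1]
      · exact h1 i j hj
    · intro i j hj hd a' ha' a'' ha'' hl
      rw [hrho i j hj hd] at hl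
      rw [hβn]
      dsimp only
      split_ifs with hc
      · dsimp only
        rw [if_neg]
        intro hc2
        rw [hc2] at hl
        exact absurd ((hM i j hj).2 a'' ha'') (not_le.2 hl)
      · refine h2 i j hj ?_ a' ha' a'' ha'' hl
        by_contra hcon
        exact hc ⟨hj, by omega⟩

/-- Each information-set term of the payoff difference against `βt` is nonpositive. -/
theorem term_nonpos (hPR : G.PerfectRecall) {β βt : G.Profile} (hβ : G.IsBehProfile β)
    (hβt : G.IsBehProfile βt) {μ : G.Belief} (hμ : G.IsBelief μ) (hY : G.YConsistent β μ)
    {i : Fin G.n} {j : ℕ} (hj : j < G.m i)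
    (h2 : ∀ a' ∈ G.infoA i j, ∀ a'' ∈ G.infoA i j,
        G.uCond i j a' (G.rho i j β βt) μ < G.uCond i j a'' (G.rho i j β βt) μ →
        βt i j a' = 0)
    {b : ℕ → ℕ → ℝ} (hb : G.IsBehStrategy i b) {r : List ℕ} (hr : G.IsSubgameRoot r)
    (hrI : ∀ h ∈ G.Info i j, r <+: h) :
    (∀ a' ∈ G.infoA i j, ∀ a'' ∈ G.infoA i j,
      ∑ h ∈ G.Info i j, G.pth (G.replace β i b) r h *
            G.uExpFrom i (G.replace β i (βt i)) (h ++ [a']) <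
      ∑ h ∈ G.Info i j, G.pth (G.replace β i b) r h *
            G.uExpFrom i (G.replace β i (βt i)) (h ++ [a'']) → βt i j a' = 0) ∧
    ∑ a ∈ G.infoA i j, (b j a - βt i j a) *
          ∑ h ∈ G.Info i j, G.pth (G.replace β i b) r h *
            G.uExpFrom i (G.replace β i (βt i)) (h ++ [a]) ≤ 0 := by
  obtain ⟨c, hc, hcp⟩ := pth_belief hPR hβ hμ hY hj hb hr hrI
  have hU : ∀ a ∈ G.infoA i j, ∑ h ∈ G.Info i j, G.pth (G.replace β i b) r h *
            G.uExpFrom i (G.replace β i (βt i)) (h ++ [a]) =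
            c * G.uCond i j a (G.rho i j β βt) μ := by
    intro a ha
    rw [uCond_eq hPR hj ha, Finset.mul_sum]
    refine Finset.sum_congr rfl fun h hh => ?_
    rw [hcp h hh, mul_assoc]
  have hs : ∀ a' ∈ G.infoA i j, ∀ a'' ∈ G.infoA i j,
      ∑ h ∈ G.Info i j, G.pth (G.replace β i b) r h *
            G.uExpFrom i (G.replace β i (βt i)) (h ++ [a']) <
      ∑ h ∈ G.Info i j, G.pth (G.replace β i b) r h *
            G.uExpFrom i (G.replace β i (βt i)) (h ++ [a'']) → βt i j a' = 0 := by
    intro a' ha' a'' ha'' hlt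
    rw [hU a' ha', hU a'' ha''] at hlt
    exact h2 a' ha' a'' ha'' (lt_of_mul_lt_mul_left hlt hc)
  refine ⟨hs, ?_⟩
  have := arg_le (infoA_nonempty hj) (hβt i j hj).2 hs (hb j hj).1 (hb j hj).2
  simp only [sub_mul, Finset.sum_sub_distrib]
  linarith

end EFG

/-- `β*` is a subgame perfect equilibrium in behavioral strategies iff there exist an extra
behavioral strategy profile `β̃*` and a belief system `μ*` such that `(β*, β̃*, μ*)`
satisfies the subgame perfect characterization. -/
theorem stmt9 (G : EFG) (hPR : G.PerfectRecall) (β : G.Profile) (hβ : G.IsBehProfile β) :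
    G.IsSubgamePerfect β ↔
      ∃ (βt : G.Profile) (μ : G.Belief), G.IsBehProfile βt ∧ G.SubgameChar β βt μ := by

  constructor
  · rintro ⟨-, hS⟩
    obtain ⟨μ, hμ, hY⟩ := EFG.exists_belief hβ
    obtain ⟨βt, hβt, h2⟩ := EFG.exists_seq hPR hβ μ
    refine ⟨βt, μ, hβt, ?_, h2, hμ, hY⟩
    intro i j hj
    obtain ⟨r, hr, hrI, hl, -⟩ := EFG.exists_root hj
    have hd := EFG.sub_diff i β (β i) (βt i) hr
    have hle := hS r hr i (βt i) (hβt i)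
    have hterm := fun j' (hj' : j' ∈ (Finset.range (G.m i)).filter
        (fun j => ∀ h ∈ G.Info i j, r <+: h)) =>
      (EFG.term_nonpos hPR hβ hβt hμ hY (Finset.mem_range.1 (Finset.mem_filter.1 hj').1)
        (h2 i j' (Finset.mem_range.1 (Finset.mem_filter.1 hj').1)) (hβ i) hr
        (Finset.mem_filter.1 hj').2).2
    have hjm : j ∈ (Finset.range (G.m i)).filter (fun j => ∀ h ∈ G.Info i j, r <+: h) :=
      Finset.mem_filter.2 ⟨Finset.mem_range.2 hj, hrI⟩
    have hs := (EFG.term_nonpos hPR hβ hβt hμ hY hj (h2 i j hj) (hβ i) hr hrI).1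
    simp only [EFG.replace_self] at hd hterm hs
    have hz := (Finset.sum_eq_zero_iff_of_nonpos hterm).1
      (le_antisymm (Finset.sum_nonpos hterm) (by rw [← hd]; linarith)) j hjm
    simp only [sub_mul, Finset.sum_sub_distrib] at hz
    have := EFG.arg_supp (EFG.infoA_nonempty hj) (hβt i j hj).2 hs (hβ i j hj).1 (hβ i j hj).2
      (by linarith)
    intro a' ha' a'' ha'' hlt
    rw [EFG.uDiamond_eq hPR hj ha' β βt hrI hl, EFG.uDiamond_eq hPR hj ha'' β βt hrI hl] at hlt
    exact this a' ha' a'' ha'' hlt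
  · rintro ⟨βt, μ, hβt, h1, h2, hμ, hY⟩
    refine ⟨hβ, fun r hr i b hb => ?_⟩
    have hA : G.uExpFrom i (G.replace β i b) r ≤ G.uExpFrom i (G.replace β i (βt i)) r := by
      rw [← sub_nonpos, EFG.sub_diff i β b (βt i) hr]
      refine Finset.sum_nonpos fun j hj => ?_
      rw [Finset.mem_filter, Finset.mem_range] at hj
      exact (EFG.term_nonpos hPR hβ hβt hμ hY hj.1 (h2 i j hj.1) hb hr hj.2).2
    have hB : G.uExpFrom i (G.replace β i (βt i)) r ≤ G.uExpFrom i β r := by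
      have hd := EFG.sub_diff i β (β i) (βt i) hr
      rw [EFG.replace_self] at hd
      rw [← sub_nonneg, hd]
      refine Finset.sum_nonneg fun j hj => ?_
      rw [Finset.mem_filter, Finset.mem_range] at hj
      obtain ⟨hj, hrI⟩ := hj
      obtain ⟨s, hs, hsI, hl, hmax⟩ := EFG.exists_root hj
      have hrs := hmax r hr hrI
      have hU : ∀ a, ∑ h ∈ G.Info i j, G.pth β r h *
          G.uExpFrom i (G.replace β i (βt i)) (h ++ [a]) = G.pth β r s *
          ∑ h ∈ G.Info i j, G.pth β s h *
          G.uExpFrom i (G.replace β i (βt i)) (h ++ [a]) := by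
        intro a
        rw [Finset.mul_sum]
        refine Finset.sum_congr rfl fun h hh => ?_
        rw [EFG.pth_trans β hrs (hsI h hh), mul_assoc]
      have hsup : ∀ a' ∈ G.infoA i j, ∀ a'' ∈ G.infoA i j,
          ∑ h ∈ G.Info i j, G.pth β r h * G.uExpFrom i (G.replace β i (βt i)) (h ++ [a']) <
          ∑ h ∈ G.Info i j, G.pth β r h * G.uExpFrom i (G.replace β i (βt i)) (h ++ [a'']) →
          β i j a' = 0 := by
        intro a' ha' a'' ha'' hlt
        refine h1 i j hj a' ha' a'' ha'' ?_
        rw [EFG.uDiamond_eq hPR hj ha' β βt hsI hl, EFG.uDiamond_eq hPR hj ha'' β βt hsI hl]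
        rw [hU a', hU a''] at hlt
        exact lt_of_mul_lt_mul_left hlt (EFG.pth_nonneg hβ hrs hs.1)
      have := EFG.arg_le (EFG.infoA_nonempty hj) (hβ i j hj).2 hsup (hβt i j hj).1 (hβt i j hj).2
      simp only [sub_mul, Finset.sum_sub_distrib]
      linarith
    exact hA.trans hB
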